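/- For every λ ∈ ℝ, let μ_λ be the bilinear skew-symmetric map on ℝ^7 with nonzero basis brackets [e1,e2]=e3, [e1,e3]=e4, [e1,e4]=λe7+e6, [e1,e5]=e7, [e1,e6]=e7, [e2,e3]=e5, [e2,e4]=e7, [e2,e5]=e6, [e3,e5]=e7. Then μ_λ satisfies the Jacobi identity, the space of derivations of (ℝ^7,μ_λ) has dimension 10, and every derivation of (ℝ^7,μ_λ) is nilpotent (i.e. (ℝ^7,μ_λ) is characteristically nilpotent). -/

import Mathlib

open Finset

noncomputable section

/-- `ℝ⁷` with its standard basis and standard inner product. -/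
abbrev V7 : Type := Fin 7 → ℝ

/-- The standard basis vector `e i`. -/
def e (i : Fin 7) : V7 := Pi.single i 1

/-- The standard inner product on `ℝ⁷`. -/
def dot (x y : V7) : ℝ := ∑ i, x i * y i

/-- Structure constants built from a list of entries `(i, j, k, a)`, each meaning that
`μ (e i) (e j)` has component `a` along `e k` (and `μ (e j) (e i)` has component `-a`);
all unlisted basis brackets are `0`. -/
def toC (L : List (Fin 7 × Fin 7 × Fin 7 × ℝ)) (i j k : Fin 7) : ℝ :=
  (L.map fun t =>
      (if t.1 = i ∧ t.2.1 = j ∧ t.2.2.1 = k then t.2.2.2 else 0)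
    - (if t.1 = j ∧ t.2.1 = i ∧ t.2.2.1 = k then t.2.2.2 else 0)).sum

/-- The bilinear skew-symmetric map on `ℝ⁷` with structure constants `c`. -/
def br (c : Fin 7 → Fin 7 → Fin 7 → ℝ) (x y : V7) : V7 :=
  fun k => ∑ i, ∑ j, x i * y j * c i j k

lemma br_add_left (c : Fin 7 → Fin 7 → Fin 7 → ℝ) (x x' y : V7) :
    br c (x + x') y = br c x y + br c x' y := by
  funext k
  simp only [br, Pi.add_apply, ← Finset.sum_add_distrib]
  exact Finset.sum_congr rfl fun i _ => Finset.sum_congr rfl fun j _ => by ring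

lemma br_smul_left (c : Fin 7 → Fin 7 → Fin 7 → ℝ) (r : ℝ) (x y : V7) :
    br c (r • x) y = r • br c x y := by
  funext k
  simp only [br, Pi.smul_apply, smul_eq_mul, Finset.mul_sum]
  exact Finset.sum_congr rfl fun i _ => Finset.sum_congr rfl fun j _ => by ring

lemma br_add_right (c : Fin 7 → Fin 7 → Fin 7 → ℝ) (x y y' : V7) :
    br c x (y + y') = br c x y + br c x y' := by
  funext k
  simp only [br, Pi.add_apply, ← Finset.sum_add_distrib]
  exact Finset.sum_congr rfl fun i _ => Finset.sum_congr rfl fun j _ => by ring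

lemma br_smul_right (c : Fin 7 → Fin 7 → Fin 7 → ℝ) (r : ℝ) (x y : V7) :
    br c x (r • y) = r • br c x y := by
  funext k
  simp only [br, Pi.smul_apply, smul_eq_mul, Finset.mul_sum]
  exact Finset.sum_congr rfl fun i _ => Finset.sum_congr rfl fun j _ => by ring

lemma br_zero_left (c : Fin 7 → Fin 7 → Fin 7 → ℝ) (y : V7) : br c 0 y = 0 := by
  funext k; simp [br]

lemma br_zero_right (c : Fin 7 → Fin 7 → Fin 7 → ℝ) (x : V7) : br c x 0 = 0 := by
  funext k; simp [br]

/-- The space of derivations of the algebra `(ℝ⁷, br c)`, i.e. the linear maps `D` with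
`D (μ x y) = μ (D x) y + μ x (D y)` for all `x, y`, as a submodule of the endomorphisms. -/
def derivations (c : Fin 7 → Fin 7 → Fin 7 → ℝ) : Submodule ℝ (Module.End ℝ V7) where
  carrier := {D | ∀ x y, D (br c x y) = br c (D x) y + br c x (D y)}
  add_mem' := by
    intro D E hD hE x y
    simp only [LinearMap.add_apply, hD x y, hE x y, br_add_left, br_add_right]
    abel
  zero_mem' := by
    intro x y
    simp [br_zero_left, br_zero_right]
  smul_mem' := by
    intro r D hD x y
    simp only [LinearMap.smul_apply, hD x y, smul_add, br_smul_left, br_smul_right]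

/-- The Jacobi identity for the bracket `br c`. -/
def Jacobi (c : Fin 7 → Fin 7 → Fin 7 → ℝ) : Prop :=
  ∀ x y z : V7, br c (br c x y) z + br c (br c y z) x + br c (br c z x) y = 0

/-- Skew-symmetry of the bracket `br c`. -/
def Skew (c : Fin 7 → Fin 7 → Fin 7 → ℝ) : Prop :=
  ∀ x y : V7, br c x y = - br c y x

/-- The diagonal endomorphism `diag (a 1, …, a 7)` of `ℝ⁷`, `e i ↦ a i • e i`. -/
def diagL (a : Fin 7 → ℝ) : Module.End ℝ V7 :=
  LinearMap.pi fun i => a i • LinearMap.proj i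

/-- Structure constants of the bracket `μ_λ` with nonzero basis brackets
`[e1,e2]=e3, [e1,e3]=e4, [e1,e4]=λe7+e6, [e1,e5]=e7, [e1,e6]=e7, [e2,e3]=e5, [e2,e4]=e7,
[e2,e5]=e6, [e3,e5]=e7`. -/
def c1 (lam : ℝ) : Fin 7 → Fin 7 → Fin 7 → ℝ :=
  toC [(0, 1, 2, (1:ℝ)),
   (0, 2, 3, 1),
   (0, 3, 6, lam),
   (0, 3, 5, 1),
   (0, 4, 6, 1),
   (0, 5, 6, 1),
   (1, 2, 4, 1),
   (1, 3, 6, 1),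
   (1, 4, 5, 1),
   (2, 4, 6, 1)]

lemma br_toC_nil (x y : V7) (k : Fin 7) : br (toC []) x y k = 0 := by
  simp [br, toC]

lemma sum_pick (x y : V7) (a b : Fin 7) (P : Prop) [Decidable P] (v : ℝ) :
    ∑ i, ∑ j, x i * y j * (if a = i ∧ b = j ∧ P then v else 0)
      = if P then x a * y b * v else 0 := by
  by_cases hP : P <;> simp [hP, ite_and]

lemma br_toC_cons (a b c : Fin 7) (v : ℝ) (L : List (Fin 7 × Fin 7 × Fin 7 × ℝ))
    (x y : V7) (k : Fin 7) :
    br (toC ((a, b, c, v) :: L)) x y k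
      = ((if c = k then x a * y b * v else 0) - (if c = k then x b * y a * v else 0))
        + br (toC L) x y k := by
  have h : ∀ i j, toC ((a, b, c, v) :: L) i j k
      = ((if a = i ∧ b = j ∧ c = k then v else 0) - (if b = i ∧ a = j ∧ c = k then v else 0))
        + toC L i j k := by
    intro i j
    simp [toC, and_left_comm]
  simp only [br, h, mul_add, mul_sub, Finset.sum_add_distrib, Finset.sum_sub_distrib, sum_pick]

/-- Explicit coordinates of the bracket `μ_λ`. -/
lemma br_c1 (lam : ℝ) (x y : V7) : br (c1 lam) x y =
    ![0, 0, x 0 * y 1 - x 1 * y 0, x 0 * y 2 - x 2 * y 0, x 1 * y 2 - x 2 * y 1,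
      (x 0 * y 3 - x 3 * y 0) + (x 1 * y 4 - x 4 * y 1),
      lam * (x 0 * y 3 - x 3 * y 0) + (x 0 * y 4 - x 4 * y 0) + (x 0 * y 5 - x 5 * y 0)
        + (x 1 * y 3 - x 3 * y 1) + (x 2 * y 4 - x 4 * y 2)] := by
  funext k
  simp only [c1, br_toC_cons, br_toC_nil]
  fin_cases k <;> simp <;> ring

lemma skew_c1 (lam : ℝ) : Skew (c1 lam) := by
  intro x y
  rw [br_c1, br_c1]
  funext k
  fin_cases k <;> simp <;> ring

lemma jacobi_c1 (lam : ℝ) : Jacobi (c1 lam) := by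
  intro x y z
  simp only [br_c1]
  funext k
  fin_cases k <;> simp <;> ring

/-- The general derivation, as a function of the ten free parameters. -/
def dfun (lam : ℝ) (p : Fin 10 → ℝ) (x : V7) : V7 :=
  ![0, 0, p 0 * x 0 + p 5 * x 1,
    p 1 * x 0 + p 6 * x 1 + p 5 * x 2,
    p 2 * x 0 + p 7 * x 1 - p 0 * x 2,
    p 3 * x 0 + p 8 * x 1 + (p 6 - p 2) * x 2 + p 5 * x 3 - p 0 * x 4,
    p 4 * x 0 + p 9 * x 1 + (lam * p 6 + p 7 + p 8 - p 1) * x 2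
      + (lam * p 5 + p 6 - p 0 - 2 * p 2) * x 3 + (p 5 - p 7) * x 4 + p 5 * x 5]

/-- The linear parametrization of the derivations. -/
def dlin (lam : ℝ) : (Fin 10 → ℝ) →ₗ[ℝ] Module.End ℝ V7 where
  toFun p :=
    { toFun := dfun lam p
      map_add' := by
        intro x y
        funext k
        fin_cases k <;> simp [dfun] <;> ring
      map_smul' := by
        intro r x
        funext k
        fin_cases k <;> simp [dfun] <;> ring }
  map_add' := by
    intro p q
    refine LinearMap.ext fun x => ?_
    funext k
    fin_cases k <;> simp [dfun] <;> ring
  map_smul' := by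
    intro r p
    refine LinearMap.ext fun x => ?_
    funext k
    fin_cases k <;> simp [dfun] <;> ring

lemma dlin_apply (lam : ℝ) (p : Fin 10 → ℝ) (x : V7) : dlin lam p x = dfun lam p x := rfl

lemma dlin_mem (lam : ℝ) (p : Fin 10 → ℝ) : dlin lam p ∈ derivations (c1 lam) := by
  intro x y
  simp only [dlin_apply, br_c1]
  funext k
  fin_cases k <;> simp [dfun] <;> ring

lemma dlin_inj (lam : ℝ) : Function.Injective (dlin lam) := by
  intro p q h
  have h0 : dfun lam p (e 0) = dfun lam q (e 0) := by rw [← dlin_apply, h, dlin_apply]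
  have h1 : dfun lam p (e 1) = dfun lam q (e 1) := by rw [← dlin_apply, h, dlin_apply]
  simp [dfun, e] at h0 h1
  funext k
  fin_cases k <;> simp <;> tauto

lemma end_expand (D : Module.End ℝ V7) (x : V7) (k : Fin 7) :
    D x k = x 0 * D (e 0) k + x 1 * D (e 1) k + x 2 * D (e 2) k + x 3 * D (e 3) k
      + x 4 * D (e 4) k + x 5 * D (e 5) k + x 6 * D (e 6) k := by
  have hx : x = x 0 • e 0 + x 1 • e 1 + x 2 • e 2 + x 3 • e 3 + x 4 • e 4 + x 5 • e 5
      + x 6 • e 6 := by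
    funext k
    fin_cases k <;> simp [e]
  conv_lhs => rw [hx]
  simp

set_option maxHeartbeats 2000000 in
lemma mem_range (lam : ℝ) (D : Module.End ℝ V7) (hD : D ∈ derivations (c1 lam)) :
    ∃ p, dlin lam p = D := by
  have H : ∀ i j k, D (br (c1 lam) (e i) (e j)) k
      = br (c1 lam) (D (e i)) (e j) k + br (c1 lam) (e i) (D (e j)) k := by
    intro i j k
    exact congrFun (hD (e i) (e j)) k
  simp only [br_c1] at H
  generalize hm : (fun i k => D (e i) k) = m at *
  have hm' : ∀ i k, D (e i) k = m i k := by intro i k; rw [← hm]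
  simp only [hm', end_expand D (Matrix.vecCons _ _)] at H
  have h01 := H 0 1
  have h02 := H 0 2
  have h03 := H 0 3
  have h04 := H 0 4
  have h12 := H 1 2
  have h13 := H 1 3
  have h14 := H 1 4
  have h24 := H 2 4
  have h15 := H 1 5 6
  clear H
  simp [Fin.forall_fin_succ, e] at h01
  simp [Fin.forall_fin_succ, e] at h02
  simp [Fin.forall_fin_succ, e] at h03
  simp [Fin.forall_fin_succ, e] at h04
  simp [Fin.forall_fin_succ, e] at h12
  simp [Fin.forall_fin_succ, e] at h13
  simp [Fin.forall_fin_succ, e] at h14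
  simp [Fin.forall_fin_succ, e] at h24
  simp [e] at h15
  obtain ⟨h010, h011, h012, h013, h014, h015, h016⟩ := h01
  obtain ⟨h020, h021, h022, h023, h024, h025, h026⟩ := h02
  obtain ⟨h030, h031, h032, h033, h034, h035, h036⟩ := h03
  obtain ⟨h040, h041, h042, h043, h044, h045, h046⟩ := h04
  obtain ⟨h120, h121, h122, h123, h124, h125, h126⟩ := h12
  obtain ⟨h130, h131, h132, h133, h134, h135, h136⟩ := h13
  obtain ⟨h140, h141, h142, h143, h144, h145, h146⟩ := h14
  obtain ⟨h240, h241, h242, h243, h244, h245, h246⟩ := h24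
  have z20 : m 2 0 = 0 := by linarith
  have z21 : m 2 1 = 0 := by linarith
  have z30 : m 3 0 = 0 := by linarith
  have z31 : m 3 1 = 0 := by linarith
  have z32 : m 3 2 = 0 := by linarith
  have z40 : m 4 0 = 0 := by linarith
  have z41 : m 4 1 = 0 := by linarith
  have z42 : m 4 2 = 0 := by linarith
  have z50 : m 5 0 = 0 := by linarith
  have z51 : m 5 1 = 0 := by linarith
  have z52 : m 5 2 = 0 := by linarith
  have z53 : m 5 3 = 0 := by linarith
  have z54 : m 5 4 = 0 := by linarith
  have z60 : m 6 0 = 0 := by linarith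
  have z61 : m 6 1 = 0 := by linarith
  have z62 : m 6 2 = 0 := by linarith
  have z63 : m 6 3 = 0 := by linarith
  have z64 : m 6 4 = 0 := by linarith
  have z65 : m 6 5 = 0 := by linarith
  have z10 : m 1 0 = 0 := by linarith [h15, z53]
  have z43 : m 4 3 = 0 := by linarith [h123, z10]
  have z01 : m 0 1 = 0 := by linarith [h045, z65, z43]
  have z34 : m 3 4 = 0 := by linarith [h024, z01]
  simp only [z10, z01, z43, z34, z65, mul_zero, add_zero, zero_add] at h035 h036 h046 h136
  have zd : m 0 0 = m 1 1 := by linarith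
  have z11 : m 1 1 = 0 := by linarith
  have z00 : m 0 0 = 0 := by linarith
  have z22 : m 2 2 = 0 := by linarith
  have z33 : m 3 3 = 0 := by linarith
  have z44 : m 4 4 = 0 := by linarith
  have z55 : m 5 5 = 0 := by linarith
  have z66 : m 6 6 = 0 := by linarith
  simp only [z66, z33, mul_zero, add_zero, zero_add] at h036
  simp only [h013] at h026 h036 h025
  refine ⟨![m 0 2, m 0 3, m 0 4, m 0 5, m 0 6, m 1 2, m 1 3, m 1 4, m 1 5, m 1 6], ?_⟩
  refine LinearMap.ext fun x => ?_
  funext k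
  rw [end_expand D x k, dlin_apply]
  simp only [hm']
  fin_cases k <;> simp [dfun, z20, z21, z30, z31, z32, z40, z41, z42, z50, z51, z52, z53, z54, z60, z61, z62, z63, z64, z65, z10, z43, z01, z34, z11, z00, z22, z33, z44, z55, z66]
  all_goals try simp only [h013, h014, h015, h016, h025, h026, h125, h126, h146, z10, z43]
  all_goals ring

lemma dlin_nilpotent (lam : ℝ) (p : Fin 10 → ℝ) : IsNilpotent (dlin lam p) := by
  refine ⟨7, LinearMap.ext fun x => ?_⟩
  have h : ∀ n : ℕ, ∀ i : Fin 7, (i : ℕ) < n → ((dlin lam p) ^ n) x i = 0 := by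
    intro n
    induction n with
    | zero => intro i hi; omega
    | succ n ih =>
      intro i hi
      rw [pow_succ', Module.End.mul_apply, dlin_apply]
      generalize ((dlin lam p) ^ n) x = y at ih
      simp only [Fin.forall_fin_succ] at ih
      simp at ih
      obtain ⟨h0, h1, h2, h3, h4, h5, h6⟩ := ih
      fin_cases i <;> simp at hi <;> simp [dfun]
      all_goals
        try rw [h0 (by omega)]
        try rw [h1 (by omega)]
        try rw [h2 (by omega)]
        try rw [h3 (by omega)]
        try rw [h4 (by omega)]
        try rw [h5 (by omega)]
        try simp
  funext i
  exact h 7 i i.isLt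

/-- For every `λ`, the bracket `μ_λ` satisfies the Jacobi identity (and is skew-symmetric),
its space of derivations has dimension 10, and every derivation is nilpotent, i.e.
`(ℝ⁷, μ_λ)` is characteristically nilpotent. -/
theorem stmt (lam : ℝ) :
    Skew (c1 lam) ∧ Jacobi (c1 lam) ∧
    Module.finrank ℝ ↥(derivations (c1 lam)) = 10 ∧
    ∀ D ∈ derivations (c1 lam), IsNilpotent D := by
  refine ⟨skew_c1 lam, jacobi_c1 lam, ?_, ?_⟩
  · have hr : derivations (c1 lam) = LinearMap.range (dlin lam) := by
      ext D
      constructor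
      · intro hD
        exact mem_range lam D hD
      · rintro ⟨p, rfl⟩
        exact dlin_mem lam p
    rw [hr, LinearMap.finrank_range_of_inj (dlin_inj lam)]
    simp
  · intro D hD
    obtain ⟨p, rfl⟩ := mem_range lam D hD
    exact dlin_nilpotent lam p
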